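/- For every α > 0, the function s ↦ log(1 + α/s) is μ_α-integrable, and ∫ log((1+s)(1+s+α)) dμ_α(s) = ∫ log(1 + α/s) dμ_α(s); in other words, the two norm-based formulas for the Lyapunov exponent λ_α agree: λ_α = (1/2) ∫ log((1+s)(1+s+α)) dμ_α(s) = (1/2) ∫ log(1 + α/s) dμ_α(s). -/

import Mathlib

/-!
The identity is stationarity of `mu α` tested against `log`. The law `mu α` is invariant under
applying `T 0` or `T α` with probability one half each, and for `s > 0`
`log (T 0 s) = log s - log (1 + s)` and `log (T α s) = log (s + α) - log (1 + s + α)`. If `log` is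
integrable, then
`2 ∫ log s = ∫ log s + ∫ log (s + α) - ∫ log ((1 + s) (1 + s + α))`,
which rearranges to the claim, because `log (1 + α / s) = log (s + α) - log s`.

Stationarity (`lintegral_mu`, `mu_eq`) comes from the doubling map `t ↦ fract (2 t)`: it shifts the
binary digits, so `Y t = T a (Y t')` with `t' = fract (2 t)` and `a` the leading digit of `t'`
(`Y_eq`); it preserves Lebesgue measure (`lintegral_doubling`); and `Y` is independent of the
leading digit because `Y (t + 1/2) = Y t` (`lintegral_Y_halves`).

Integrability of `log`, together with `Y > 0` almost surely, follows from `E[1/Y] < ∞`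
(`lintegral_inv_lt_top`), since `|log s| ≤ 1/s` on `(0, 1]`. The moment bound is again a
consequence of stationarity, as `1 / T 0 s = 1 + 1/s` and `1 / T α s ≤ 1 / T α 0`.
-/

open MeasureTheory Filter Set ENNReal

noncomputable def T (a x : ℝ) : ℝ := (x + a) / (1 + x + a)

noncomputable def M (a : ℝ) : ℝ := (-a + Real.sqrt (a ^ 2 + 4 * a)) / 2

/-- `comp x n s = T_{x 1} ∘ T_{x 2} ∘ ⋯ ∘ T_{x n} (s)`. -/
noncomputable def comp (x : ℕ → ℝ) : ℕ → ℝ → ℝ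
  | 0, s => s
  | n + 1, s => comp x n (T (x (n + 1)) s)

/-- An i.i.d. sequence of fair-coin random variables taking values `0` and `α`, realized on
the probability space `[0,1)` with Lebesgue measure via binary digits:
`seq α t i = α` if the binary digit of `t` at position `i` is `1`, and `0` otherwise. -/
noncomputable def seq (α t : ℝ) (i : ℕ) : ℝ :=
  if Int.fract (2 ^ i * t) < 1 / 2 then 0 else α

/-- The (a.s. defined) limit `Y = lim_n T_{X 1} ∘ ⋯ ∘ T_{X n} (0)`; since the sequence is
nondecreasing and bounded, the limit equals the supremum. -/
noncomputable def Y (α t : ℝ) : ℝ := ⨆ n, comp (seq α t) n 0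

/-- `mu α` is the law of the random continued fraction `Y`. -/
noncomputable def mu (α : ℝ) : Measure ℝ :=
  Measure.map (Y α) (volume.restrict (Set.Ico (0 : ℝ) 1))

/-- The Lyapunov exponent `λ_α`. -/
noncomputable def lam (α : ℝ) : ℝ :=
  (1 / 2) * ∫ s, Real.log ((1 + s) * (1 + s + α)) ∂(mu α)

/-! ### Elementary properties of the maps and of the limit -/

lemma T_nonneg {a x : ℝ} (ha : 0 ≤ a) (hx : 0 ≤ x) : 0 ≤ T a x := by
  unfold T; positivity

lemma T_le_one {a x : ℝ} (ha : 0 ≤ a) (hx : 0 ≤ x) : T a x ≤ 1 := by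
  unfold T
  rw [div_le_one (by positivity)]
  linarith

lemma T_mono {a x y : ℝ} (ha : 0 ≤ a) (hx : 0 ≤ x) (hxy : x ≤ y) : T a x ≤ T a y := by
  unfold T
  rw [div_le_div_iff₀ (by linarith) (by linarith)]
  nlinarith

lemma measurable_T (a : ℝ) : Measurable (T a) := by
  unfold T; fun_prop

/-- The outermost map can be peeled off; `comp` itself recurses on the innermost one. -/
lemma comp_succ_left (x : ℕ → ℝ) (n : ℕ) (s : ℝ) :
    comp x (n + 1) s = T (x 1) (comp (fun i => x (i + 1)) n s) := by
  induction n generalizing s with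
  | zero => rfl
  | succ n ih =>
    change comp x (n + 1) (T (x (n + 1 + 1)) s) = _
    rw [ih]
    rfl

lemma comp_nonneg {x : ℕ → ℝ} (hx : ∀ i, 0 ≤ x i) (n : ℕ) {s : ℝ} (hs : 0 ≤ s) :
    0 ≤ comp x n s := by
  induction n generalizing s with
  | zero => exact hs
  | succ n ih => exact ih (T_nonneg (hx _) hs)

lemma comp_mono {x : ℕ → ℝ} (hx : ∀ i, 0 ≤ x i) (n : ℕ) {s t : ℝ} (hs : 0 ≤ s) (hst : s ≤ t) :
    comp x n s ≤ comp x n t := by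
  induction n generalizing s t with
  | zero => exact hst
  | succ n ih => exact ih (T_nonneg (hx _) hs) (T_mono (hx _) hs hst)

lemma comp_zero_le_one {x : ℕ → ℝ} (hx : ∀ i, 0 ≤ x i) (n : ℕ) : comp x n 0 ≤ 1 := by
  cases n with
  | zero => exact zero_le_one
  | succ n =>
    rw [comp_succ_left]
    exact T_le_one (hx _) (comp_nonneg (fun i => hx _) n le_rfl)

lemma comp_zero_monotone {x : ℕ → ℝ} (hx : ∀ i, 0 ≤ x i) : Monotone fun n => comp x n 0 :=
  monotone_nat_of_le_succ fun n => comp_mono hx n le_rfl (T_nonneg (hx _) le_rfl)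

lemma seq_nonneg {α : ℝ} (hα : 0 < α) (t : ℝ) (i : ℕ) : 0 ≤ seq α t i := by
  unfold _root_.seq; split_ifs <;> [exact le_rfl; exact hα.le]

lemma bddAbove_comp {α : ℝ} (hα : 0 < α) (t : ℝ) :
    BddAbove (range fun n => comp (seq α t) n 0) :=
  ⟨1, by rintro _ ⟨n, rfl⟩; exact comp_zero_le_one (seq_nonneg hα t) n⟩

lemma tendsto_comp {α : ℝ} (hα : 0 < α) (t : ℝ) :
    Tendsto (fun n => comp (seq α t) n 0) atTop (nhds (Y α t)) :=
  tendsto_atTop_ciSup (comp_zero_monotone (seq_nonneg hα t)) (bddAbove_comp hα t)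

lemma Y_nonneg {α : ℝ} (hα : 0 < α) (t : ℝ) : 0 ≤ Y α t :=
  le_ciSup (bddAbove_comp hα t) 0

lemma Y_le_one {α : ℝ} (hα : 0 < α) (t : ℝ) : Y α t ≤ 1 :=
  ciSup_le fun n => comp_zero_le_one (seq_nonneg hα t) n

lemma measurable_comp {x : ℝ → ℕ → ℝ} (hx : ∀ i, Measurable fun t => x t i) (n : ℕ) :
    ∀ s : ℝ → ℝ, Measurable s → Measurable fun t => comp (x t) n (s t) := by
  induction n with
  | zero => exact fun s hs => hs
  | succ n ih =>
    intro s hs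
    refine ih (fun t => T (x t (n + 1)) (s t)) ?_
    have := hx (n + 1)
    unfold T
    fun_prop

lemma measurable_seq (α : ℝ) (i : ℕ) : Measurable fun t => seq α t i := by
  unfold _root_.seq
  refine Measurable.ite ?_ measurable_const measurable_const
  exact measurableSet_lt (by fun_prop) measurable_const

lemma measurable_Y {α : ℝ} (hα : 0 < α) : Measurable (Y α) :=
  measurable_of_tendsto_metrizable
    (fun n => measurable_comp (measurable_seq α) n _ measurable_const)
    (tendsto_pi_nhds.2 fun t => tendsto_comp hα t)

lemma seq_succ (α t : ℝ) (i : ℕ) : seq α t (i + 1) = seq α (Int.fract (2 * t)) i := by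
  have : Int.fract ((2 : ℝ) ^ (i + 1) * t) = Int.fract (2 ^ i * Int.fract (2 * t)) := by
    rw [Int.fract_eq_fract]
    refine ⟨2 ^ i * ⌊2 * t⌋, ?_⟩
    push_cast
    rw [Int.fract]
    ring
  simp only [_root_.seq, this]

/-- `Y` satisfies the random fixed point equation `Y = T_{X 1} (Y')`, where `Y'` is driven by the
shifted digits, that is by the image of `t` under the doubling map. -/
lemma Y_eq {α : ℝ} (hα : 0 < α) (t : ℝ) :
    Y α t = T (seq α (Int.fract (2 * t)) 0) (Y α (Int.fract (2 * t))) := by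
  have h1 := (tendsto_comp hα t).comp (tendsto_add_atTop_nat 1)
  have h2 := tendsto_comp hα (Int.fract (2 * t))
  refine tendsto_nhds_unique h1 ?_
  have : (fun n => comp (seq α t) n 0) ∘ (fun a => a + 1) =
      fun n => T (seq α (Int.fract (2 * t)) 0) (comp (seq α (Int.fract (2 * t))) n 0) := by
    funext n
    simp only [Function.comp, comp_succ_left, seq_succ]
  rw [this]
  have ha := seq_nonneg hα (Int.fract (2 * t)) 0
  have hY := Y_nonneg hα (Int.fract (2 * t))
  unfold T
  exact (h2.add_const _).div ((h2.const_add 1).add_const _) (by positivity)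

lemma Y_add_half {α : ℝ} (hα : 0 < α) (t : ℝ) : Y α (t + 1 / 2) = Y α t := by
  rw [Y_eq hα, Y_eq hα t]
  have : Int.fract (2 * (t + 1 / 2)) = Int.fract (2 * t) := by
    rw [show 2 * (t + 1 / 2) = 2 * t + 1 by ring, Int.fract_add_one]
  rw [this]

/-! ### Stationarity -/

/-- Each branch of the doubling map carries Lebesgue measure on a half interval to half of
Lebesgue measure on the unit interval. -/
lemma lintegral_branch (a : ℝ) (F : ℝ → ℝ≥0∞) (hF : Measurable F) :
    ∫⁻ t in Ico a (a + 1 / 2), F (2 * t - 2 * a) = 2⁻¹ * ∫⁻ t in Ico (0 : ℝ) 1, F t := by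
  set G : ℝ → ℝ≥0∞ := (Ico (0 : ℝ) 1).indicator F with hG
  have hGm : Measurable G := hF.indicator measurableSet_Ico
  have h1 : ∫⁻ t, G (2 * t) = 2⁻¹ * ∫⁻ t, G t := by
    rw [← lintegral_map hGm (measurable_const_mul (2 : ℝ)),
      Real.map_volume_mul_left (two_ne_zero), lintegral_smul_measure, smul_eq_mul,
      abs_of_pos (by norm_num), ENNReal.ofReal_inv_of_pos two_pos, ENNReal.ofReal_ofNat]
  have h2 : ∫⁻ t, G (2 * (t - a)) = ∫⁻ t, G (2 * t) :=
    lintegral_sub_right_eq_self (fun t => G (2 * t)) a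
  rw [← lintegral_indicator measurableSet_Ico, ← lintegral_indicator measurableSet_Ico, ← hG,
    ← h1, ← h2]
  congr 1
  funext t
  rw [hG, mul_sub]
  by_cases h : t ∈ Ico a (a + 1 / 2)
  · have h' : 2 * t - 2 * a ∈ Ico (0 : ℝ) 1 := ⟨by linarith [h.1], by linarith [h.2]⟩
    rw [indicator_of_mem h, indicator_of_mem h']
  · have h' : 2 * t - 2 * a ∉ Ico (0 : ℝ) 1 := fun h' =>
      h ⟨by linarith [h'.1], by linarith [h'.2]⟩
    rw [indicator_of_notMem h, indicator_of_notMem h']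

lemma lintegral_split (F : ℝ → ℝ≥0∞) :
    ∫⁻ t in Ico (0 : ℝ) 1, F t =
      (∫⁻ t in Ico (0 : ℝ) (1 / 2), F t) + ∫⁻ t in Ico (1 / 2 : ℝ) 1, F t := by
  rw [← lintegral_union measurableSet_Ico Ico_disjoint_Ico_same,
    Ico_union_Ico_eq_Ico (by norm_num) (by norm_num)]

/-- The doubling map preserves Lebesgue measure on `[0,1)`. -/
lemma lintegral_doubling (F : ℝ → ℝ≥0∞) (hF : Measurable F) :
    ∫⁻ t in Ico (0 : ℝ) 1, F (Int.fract (2 * t)) = ∫⁻ t in Ico (0 : ℝ) 1, F t := by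
  have h0 : ∫⁻ t in Ico (0 : ℝ) (1 / 2), F (Int.fract (2 * t)) =
      2⁻¹ * ∫⁻ t in Ico (0 : ℝ) 1, F t := by
    have := lintegral_branch 0 F hF
    rw [zero_add] at this
    rw [← this]
    refine setLIntegral_congr_fun measurableSet_Ico fun t ht => ?_
    simp only [mul_zero, sub_zero]
    rw [Int.fract_eq_self.2 ⟨by linarith [ht.1], by linarith [ht.2]⟩]
  have h1 : ∫⁻ t in Ico (1 / 2 : ℝ) 1, F (Int.fract (2 * t)) =
      2⁻¹ * ∫⁻ t in Ico (0 : ℝ) 1, F t := by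
    have := lintegral_branch (1 / 2) F hF
    rw [add_halves] at this
    rw [← this]
    refine setLIntegral_congr_fun measurableSet_Ico fun t ht => ?_
    have : Int.fract (2 * t) = 2 * t - 2 * (1 / 2) := by
      rw [Int.fract_eq_iff]
      exact ⟨by linarith [ht.1], by linarith [ht.2], 1, by norm_num⟩
    simp only [this]
  rw [lintegral_split, h0, h1, ← add_mul, ENNReal.inv_two_add_inv_two, one_mul]

/-- `Y` does not depend on the leading digit: both halves of `[0,1)` contribute equally. -/
lemma lintegral_Y_halves {α : ℝ} (hα : 0 < α) (F : ℝ → ℝ≥0∞) :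
    ∫⁻ t in Ico (0 : ℝ) (1 / 2), F (Y α t) = 2⁻¹ * ∫⁻ t in Ico (0 : ℝ) 1, F (Y α t) ∧
    ∫⁻ t in Ico (1 / 2 : ℝ) 1, F (Y α t) = 2⁻¹ * ∫⁻ t in Ico (0 : ℝ) 1, F (Y α t) := by
  have h : ∫⁻ t in Ico (0 : ℝ) (1 / 2), F (Y α t) = ∫⁻ t in Ico (1 / 2 : ℝ) 1, F (Y α t) := by
    rw [← lintegral_indicator measurableSet_Ico, ← lintegral_indicator measurableSet_Ico,
      ← lintegral_add_right_eq_self ((Ico (1 / 2 : ℝ) 1).indicator _) (1 / 2 : ℝ)]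
    congr 1
    funext t
    by_cases h : t ∈ Ico (0 : ℝ) (1 / 2)
    · have h' : t + 1 / 2 ∈ Ico (1 / 2 : ℝ) 1 := ⟨by linarith [h.1], by linarith [h.2]⟩
      rw [indicator_of_mem h, indicator_of_mem h', Y_add_half hα]
    · have h' : t + 1 / 2 ∉ Ico (1 / 2 : ℝ) 1 := fun h' =>
        h ⟨by linarith [h'.1], by linarith [h'.2]⟩
      rw [indicator_of_notMem h, indicator_of_notMem h']
  have key : ∀ x : ℝ≥0∞, x = 2⁻¹ * (x + x) := fun x => by
    rw [mul_add, ← add_mul, ENNReal.inv_two_add_inv_two, one_mul]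
  rw [lintegral_split, ← h]
  exact ⟨key _, key _⟩

/-- Stationarity of `mu α`: it is invariant under applying `T 0` or `T α` with probability
one half each. -/
lemma lintegral_mu {α : ℝ} (hα : 0 < α) (f : ℝ → ℝ≥0∞) (hf : Measurable f) :
    ∫⁻ s, f s ∂(mu α) =
      2⁻¹ * ∫⁻ s, f (T 0 s) ∂(mu α) + 2⁻¹ * ∫⁻ s, f (T α s) ∂(mu α) := by
  have hY := measurable_Y hα
  have hmap : ∀ g : ℝ → ℝ≥0∞, Measurable g →
      ∫⁻ s, g s ∂(mu α) = ∫⁻ t in Ico (0 : ℝ) 1, g (Y α t) := fun g hg =>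
    lintegral_map hg hY
  have hZ : Measurable fun u => T (seq α u 0) (Y α u) := by
    have := measurable_seq α 0
    unfold T
    fun_prop
  rw [hmap f hf, hmap (fun s => f (T 0 s)) (hf.comp (measurable_T 0)),
    hmap (fun s => f (T α s)) (hf.comp (measurable_T α))]
  calc ∫⁻ t in Ico (0 : ℝ) 1, f (Y α t)
      = ∫⁻ t in Ico (0 : ℝ) 1, f (T (seq α (Int.fract (2 * t)) 0) (Y α (Int.fract (2 * t)))) := by
        simp only [← Y_eq hα]
    _ = ∫⁻ u in Ico (0 : ℝ) 1, f (T (seq α u 0) (Y α u)) :=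
        lintegral_doubling _ (hf.comp hZ)
    _ = (∫⁻ u in Ico (0 : ℝ) (1 / 2), f (T 0 (Y α u))) +
          ∫⁻ u in Ico (1 / 2 : ℝ) 1, f (T α (Y α u)) := by
        rw [lintegral_split]
        congr 1
        · refine setLIntegral_congr_fun measurableSet_Ico fun t ht => ?_
          have : seq α t 0 = 0 := by
            unfold _root_.seq
            rw [pow_zero, one_mul, Int.fract_eq_self.2 ⟨ht.1, by linarith [ht.2]⟩, if_pos ht.2]
          simp only [this]
        · refine setLIntegral_congr_fun measurableSet_Ico fun t ht => ?_
          have : seq α t 0 = α := by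
            unfold _root_.seq
            rw [pow_zero, one_mul, Int.fract_eq_self.2 ⟨by linarith [ht.1], ht.2⟩,
              if_neg (not_lt.2 ht.1)]
          simp only [this]
    _ = _ := by
        rw [(lintegral_Y_halves hα fun s => f (T 0 s)).1,
          (lintegral_Y_halves hα fun s => f (T α s)).2]

lemma isProbabilityMeasure_mu {α : ℝ} (hα : 0 < α) : IsProbabilityMeasure (mu α) := by
  have : IsProbabilityMeasure (volume.restrict (Ico (0 : ℝ) 1)) := ⟨by simp⟩
  exact Measure.isProbabilityMeasure_map (measurable_Y hα).aemeasurable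

lemma ae_mem_mu {α : ℝ} (hα : 0 < α) : ∀ᵐ s ∂(mu α), s ∈ Icc (0 : ℝ) 1 := by
  refine (ae_map_iff (measurable_Y hα).aemeasurable measurableSet_Icc).2 ?_
  exact ae_of_all _ fun t => ⟨Y_nonneg hα t, Y_le_one hα t⟩

lemma mu_eq {α : ℝ} (hα : 0 < α) :
    mu α = (2⁻¹ : ℝ≥0∞) • Measure.map (T 0) (mu α) + (2⁻¹ : ℝ≥0∞) • Measure.map (T α) (mu α) := by
  refine Measure.ext_of_lintegral _ fun f hf => ?_
  rw [lintegral_add_measure, lintegral_smul_measure, lintegral_smul_measure,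
    lintegral_map hf (measurable_T 0), lintegral_map hf (measurable_T α)]
  exact lintegral_mu hα f hf

/-! ### The moment bound and integrability -/

lemma T_zero_inv_le {s : ℝ} (hs : 0 ≤ s) :
    (ENNReal.ofReal (T 0 s))⁻¹ ≤ 1 + (ENNReal.ofReal s)⁻¹ := by
  rcases hs.eq_or_lt with rfl | hs
  · simp
  · have hT : 0 < T 0 s := by unfold T; positivity
    rw [← ENNReal.ofReal_inv_of_pos hT, ← ENNReal.ofReal_inv_of_pos hs, ← ENNReal.ofReal_one,
      ← ENNReal.ofReal_add zero_le_one (by positivity)]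
    refine ENNReal.ofReal_le_ofReal (le_of_eq ?_)
    unfold T
    field_simp
    ring

lemma T_inv_le {α s : ℝ} (hα : 0 < α) (hs : 0 ≤ s) :
    (ENNReal.ofReal (T α s))⁻¹ ≤ (ENNReal.ofReal (T α 0))⁻¹ :=
  ENNReal.inv_le_inv.2 (ENNReal.ofReal_le_ofReal (T_mono hα.le le_rfl hs))

/-- The moment bound `E[1/Y] ≤ 1 + 1/T α 0`. Since `1/T 0 s = 1 + 1/s` and `1/T α s ≤ 1/T α 0`,
stationarity bounds the mean of `min (1/s) N` by half of itself plus a constant. -/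
lemma lintegral_inv_lt_top {α : ℝ} (hα : 0 < α) :
    ∫⁻ s, (ENNReal.ofReal s)⁻¹ ∂(mu α) < ∞ := by
  have := isProbabilityMeasure_mu hα
  set c : ℝ≥0∞ := (ENNReal.ofReal (T α 0))⁻¹ with hc
  have hc_top : c < ∞ := by
    rw [hc, ENNReal.inv_lt_top, ENNReal.ofReal_pos]
    unfold T
    positivity
  set g : ℕ → ℝ → ℝ≥0∞ := fun N s => min (ENNReal.ofReal s)⁻¹ N with hg
  have hgm : ∀ N, Measurable (g N) := fun N =>
    (ENNReal.measurable_ofReal.inv).min measurable_const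
  have hbound : ∀ N, ∫⁻ s, g N s ∂(mu α) ≤ 1 + c := by
    intro N
    set J := ∫⁻ s, g N s ∂(mu α) with hJ
    have hJtop : J ≠ ∞ := by
      refine ne_top_of_le_ne_top (ENNReal.natCast_ne_top N) ?_
      calc J ≤ ∫⁻ _, (N : ℝ≥0∞) ∂(mu α) := lintegral_mono fun s => min_le_right _ _
        _ = N := by simp
    have h0 : ∫⁻ s, g N (T 0 s) ∂(mu α) ≤ 1 + J := by
      calc ∫⁻ s, g N (T 0 s) ∂(mu α) ≤ ∫⁻ s, (1 + g N s) ∂(mu α) := by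
            refine lintegral_mono_ae ((ae_mem_mu hα).mono fun s hs => ?_)
            simp only [hg, ← min_add_add_left]
            exact min_le_min (T_zero_inv_le hs.1) le_add_self
        _ = 1 + J := by
            rw [lintegral_add_left measurable_const]
            simp [hJ]
    have h1 : ∫⁻ s, g N (T α s) ∂(mu α) ≤ c := by
      calc ∫⁻ s, g N (T α s) ∂(mu α) ≤ ∫⁻ _, c ∂(mu α) :=
            lintegral_mono_ae ((ae_mem_mu hα).mono fun s hs =>
              (min_le_left _ _).trans (T_inv_le hα hs.1))
        _ = c := by simp
    have h2 : J ≤ 2⁻¹ * (1 + J) + 2⁻¹ * c := by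
      conv_lhs => rw [hJ, lintegral_mu hα _ (hgm N)]
      gcongr
    have h3 : J + J ≤ J + (1 + c) := by
      calc J + J = 2 * J := (two_mul J).symm
        _ ≤ 2 * (2⁻¹ * (1 + J) + 2⁻¹ * c) := by gcongr
        _ = J + (1 + c) := by
          rw [mul_add, ← mul_assoc, ← mul_assoc, ENNReal.mul_inv_cancel two_ne_zero
            ENNReal.ofNat_ne_top, one_mul, one_mul]
          ring
    exact (ENNReal.add_le_add_iff_left hJtop).1 h3
  refine lt_of_le_of_lt ?_ (ENNReal.add_lt_top.2 ⟨ENNReal.one_lt_top, hc_top⟩)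
  have hsup : ∀ s, (ENNReal.ofReal s)⁻¹ = ⨆ N, g N s := by
    intro s
    change _ = ⨆ N : ℕ, (ENNReal.ofReal s)⁻¹ ⊓ (N : ℝ≥0∞)
    rw [← inf_iSup_eq, ENNReal.iSup_natCast, inf_top_eq]
  calc ∫⁻ s, (ENNReal.ofReal s)⁻¹ ∂(mu α) = ∫⁻ s, ⨆ N, g N s ∂(mu α) := by simp only [hsup]
    _ = ⨆ N, ∫⁻ s, g N s ∂(mu α) := by
        refine lintegral_iSup hgm fun m n hmn s => ?_
        exact min_le_min le_rfl (by exact_mod_cast hmn)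
    _ ≤ 1 + c := iSup_le hbound

/-- `mu α` has no atom at `0`, where the logarithms degenerate. -/
lemma ae_pos_mu {α : ℝ} (hα : 0 < α) : ∀ᵐ s ∂(mu α), s ∈ Ioc (0 : ℝ) 1 := by
  filter_upwards [ae_mem_mu hα,
    ae_lt_top ENNReal.measurable_ofReal.inv (lintegral_inv_lt_top hα).ne] with s hs h
  exact ⟨ENNReal.ofReal_pos.1 (ENNReal.inv_lt_top.1 h), hs.2⟩

lemma integrable_log {α : ℝ} (hα : 0 < α) : Integrable Real.log (mu α) := by
  refine ⟨Real.measurable_log.aestronglyMeasurable, ?_⟩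
  refine lt_of_le_of_lt (lintegral_mono_ae ?_) (lintegral_inv_lt_top hα)
  filter_upwards [ae_pos_mu hα] with s hs
  rw [← ENNReal.ofReal_inv_of_pos hs.1, ← ofReal_norm, Real.norm_eq_abs,
    abs_of_nonpos (Real.log_nonpos hs.1.le hs.2), ← Real.log_inv]
  exact ENNReal.ofReal_le_ofReal (by
    linarith [Real.log_le_sub_one_of_pos (inv_pos.2 hs.1)])

lemma integrable_log_add {α : ℝ} (hα : 0 < α) {b : ℝ} (hb : 0 < b) :
    Integrable (fun s => Real.log (s + b)) (mu α) := by
  have := isProbabilityMeasure_mu hα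
  refine Integrable.of_bound
    (Real.measurable_log.comp (measurable_id.add_const b)).aestronglyMeasurable
    (|Real.log b| + |Real.log (1 + b)|) ?_
  filter_upwards [ae_mem_mu hα] with s hs
  have h1 := Real.log_le_log hb (by linarith [hs.1] : b ≤ s + b)
  have h2 := Real.log_le_log (by linarith [hs.1]) (by linarith [hs.2] : s + b ≤ 1 + b)
  rw [Real.norm_eq_abs, abs_le]
  constructor
  · linarith [neg_abs_le (Real.log b), abs_nonneg (Real.log (1 + b))]
  · linarith [le_abs_self (Real.log (1 + b)), abs_nonneg (Real.log b)]

/-! ### The two formulas -/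

theorem lyapunov_formulas_agree (α : ℝ) (hα : 0 < α) :
    Integrable (fun s => Real.log (1 + α / s)) (mu α) ∧
    ∫ s, Real.log ((1 + s) * (1 + s + α)) ∂(mu α) = ∫ s, Real.log (1 + α / s) ∂(mu α) ∧
    lam α = (1 / 2) * ∫ s, Real.log (1 + α / s) ∂(mu α) := by
  have hlog := integrable_log hα
  have hA := integrable_log_add hα hα
  have hB := integrable_log_add hα one_pos
  have hC := integrable_log_add hα (by linarith : 0 < 1 + α)
  have e1 : (fun s => Real.log (1 + α / s)) =ᵐ[mu α] fun s => Real.log (s + α) - Real.log s := by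
    filter_upwards [ae_pos_mu hα] with s hs
    have := hs.1
    rw [← Real.log_div (by positivity) this.ne', add_div, div_self this.ne']
  have e2 : (fun s => Real.log ((1 + s) * (1 + s + α))) =ᵐ[mu α]
      fun s => Real.log (s + 1) + Real.log (s + (1 + α)) := by
    filter_upwards [ae_pos_mu hα] with s hs
    have := hs.1
    rw [Real.log_mul (by positivity) (by positivity), add_comm 1 s, add_assoc]
  have e3 : (fun s => Real.log (T 0 s)) =ᵐ[mu α] fun s => Real.log s - Real.log (s + 1) := by
    filter_upwards [ae_pos_mu hα] with s hs
    have := hs.1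
    rw [← Real.log_div (by positivity) (by positivity), T]
    congr 1
    ring
  have e4 : (fun s => Real.log (T α s)) =ᵐ[mu α]
      fun s => Real.log (s + α) - Real.log (s + (1 + α)) := by
    filter_upwards [ae_pos_mu hα] with s hs
    have := hs.1
    rw [← Real.log_div (by positivity) (by positivity), T]
    congr 2
    ring
  have i0 : Integrable Real.log (Measure.map (T 0) (mu α)) :=
    (integrable_map_measure Real.measurable_log.aestronglyMeasurable
      (measurable_T 0).aemeasurable).2 ((hlog.sub hB).congr e3.symm)
  have i1 : Integrable Real.log (Measure.map (T α) (mu α)) :=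
    (integrable_map_measure Real.measurable_log.aestronglyMeasurable
      (measurable_T α).aemeasurable).2 ((hA.sub hC).congr e4.symm)
  -- Stationarity applied to the test function `log`.
  have stat : ∫ s, Real.log s ∂(mu α) =
      2⁻¹ * (∫ s, Real.log s ∂(mu α) - ∫ s, Real.log (s + 1) ∂(mu α)) +
      2⁻¹ * (∫ s, Real.log (s + α) ∂(mu α) - ∫ s, Real.log (s + (1 + α)) ∂(mu α)) := by
    conv_lhs => rw [mu_eq hα]
    rw [integral_add_measure (i0.smul_measure (by simp)) (i1.smul_measure (by simp)),
      integral_smul_measure, integral_smul_measure,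
      integral_map (measurable_T 0).aemeasurable Real.measurable_log.aestronglyMeasurable,
      integral_map (measurable_T α).aemeasurable Real.measurable_log.aestronglyMeasurable,
      integral_congr_ae e3, integral_congr_ae e4, integral_sub hlog hB, integral_sub hA hC]
    simp
  have main : ∫ s, Real.log ((1 + s) * (1 + s + α)) ∂(mu α) =
      ∫ s, Real.log (1 + α / s) ∂(mu α) := by
    rw [integral_congr_ae e1, integral_congr_ae e2, integral_add hB hC, integral_sub hA hlog]
    linarith
  exact ⟨(hA.sub hlog).congr e1.symm, main, by rw [lam, main]⟩
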